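/- Assume E₀, U, L, K satisfy the hypothesis and define h := {(x,y) ∈ BD(G) ⊕ BD(G) : π*_{BD(G)}x ∈ E₀ and K^⋄Kπ*_{BD(G)}x − L^⋄π*_{BD(D)}Ġy ∈ E}. Then for every (x,y) ∈ h one has Re⟨x,y⟩_{BD(G)} = ‖Kπ*_{BD(G)}x‖²_U; in particular Re⟨x,y⟩_{BD(G)} ≥ 0. -/

import Mathlib

open scoped ComplexInnerProductSpace
open Filter Topology Classical

noncomputable section

variable {E H : Type*}
  [NormedAddCommGroup E] [InnerProductSpace ℂ E] [CompleteSpace E]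
  [NormedAddCommGroup H] [InnerProductSpace ℂ H] [CompleteSpace H]

/-- The operator `G := (−D₀)*`. -/
def Gop (D₀ : H →ₗ.[ℂ] E) : E →ₗ.[ℂ] H := (-D₀).adjoint

/-- The operator `D := −(G₀)*`. -/
def Dop (G₀ : E →ₗ.[ℂ] H) : H →ₗ.[ℂ] E := -(G₀.adjoint)

/-- Pointwise application of `G`, defined to be `0` off the domain. -/
def Gap (D₀ : H →ₗ.[ℂ] E) (u : E) : H :=
  if h : u ∈ (Gop D₀).domain then Gop D₀ ⟨u, h⟩ else 0

/-- Pointwise application of `D`, defined to be `0` off the domain. -/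
def Dap (G₀ : E →ₗ.[ℂ] H) (w : H) : E :=
  if h : w ∈ (Dop G₀).domain then Dop G₀ ⟨w, h⟩ else 0

/-- The graph inner product of `D_G`: `⟪x,y⟫_E + ⟪Gx,Gy⟫_H`. -/
def innG (D₀ : H →ₗ.[ℂ] E) (x y : E) : ℂ := ⟪x, y⟫ + ⟪Gap D₀ x, Gap D₀ y⟫

/-- The graph inner product of `D_D`: `⟪x,y⟫_H + ⟪Dx,Dy⟫_E`. -/
def innD (G₀ : E →ₗ.[ℂ] H) (x y : H) : ℂ := ⟪x, y⟫ + ⟪Dap G₀ x, Dap G₀ y⟫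

/-- The boundary data space `BD(G)`, the orthogonal complement of `D(G₀)` in `D_G`. -/
def BDG (G₀ : E →ₗ.[ℂ] H) (D₀ : H →ₗ.[ℂ] E) : Set E :=
  {u | u ∈ (Gop D₀).domain ∧ ∀ v ∈ G₀.domain, innG D₀ u v = 0}

/-- The boundary data space `BD(D)`, the orthogonal complement of `D(D₀)` in `D_D`. -/
def BDD (G₀ : E →ₗ.[ℂ] H) (D₀ : H →ₗ.[ℂ] E) : Set H :=
  {w | w ∈ (Dop G₀).domain ∧ ∀ v ∈ D₀.domain, innD G₀ w v = 0}

variable {U E₀ : Type*}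
  [NormedAddCommGroup U] [InnerProductSpace ℂ U] [CompleteSpace U]
  [NormedAddCommGroup E₀] [InnerProductSpace ℂ E₀] [CompleteSpace E₀]

/-- Closedness of the operator `(L,K) : E₀ ⊆ E → H ⊕ U`: whenever `wₙ` in `E₀` with `wₙ → w`
in `E`, `Lwₙ → v` in `H` and `Kwₙ → z` in `U`, then `w ∈ E₀`, `Lw = v` and `Kw = z`. -/
def ClosedLK (j : E₀ →L[ℂ] E) (L : E₀ →L[ℂ] H) (K : E₀ →L[ℂ] U) : Prop :=
  ∀ (f : ℕ → E₀) (w : E) (v : H) (z : U),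
    Tendsto (fun n => j (f n)) atTop (nhds w) →
    Tendsto (fun n => L (f n)) atTop (nhds v) →
    Tendsto (fun n => K (f n)) atTop (nhds z) →
    ∃ w₀ : E₀, j w₀ = w ∧ L w₀ = v ∧ K w₀ = z

/-- The boundary relation `h` associated with `A`:
`h = {(x,y) ∈ BD(G) ⊕ BD(G) : π*x ∈ E₀, K^⋄Kπ*x − L^⋄π*Ġy ∈ E}`. -/
def hRel (G₀ : E →ₗ.[ℂ] H) (D₀ : H →ₗ.[ℂ] E) (j : E₀ →L[ℂ] E) (L : E₀ →L[ℂ] H)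
    (K : E₀ →L[ℂ] U) : Set (E × E) :=
  {p | p.1 ∈ BDG G₀ D₀ ∧ p.2 ∈ BDG G₀ D₀ ∧
    ∃ x₀ : E₀, j x₀ = p.1 ∧
      ∃ e : E, ∀ z : E₀, (⟪e, j z⟫ : ℂ) = ⟪K x₀, K z⟫ - ⟪Gap D₀ p.2, L z⟫}

/-- For every `(x,y) ∈ h` one has `Re⟪x,y⟫_{BD(G)} = ‖Kπ*_{BD(G)}x‖²_U`; in particular
`Re⟪x,y⟫_{BD(G)} ≥ 0`. -/
theorem hRel_re_inner_eq_norm_sq (G₀ : E →ₗ.[ℂ] H) (D₀ : H →ₗ.[ℂ] E)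
    (hG₀dense : Dense (G₀.domain : Set E)) (hD₀dense : Dense (D₀.domain : Set H))
    (hG₀closed : G₀.IsClosed) (hD₀closed : D₀.IsClosed)
    (hsub : G₀ ≤ Gop D₀)
    (j : E₀ →L[ℂ] E) (L : E₀ →L[ℂ] H) (K : E₀ →L[ℂ] U)
    (hj_inj : Function.Injective j) (hj_dense : DenseRange j)
    (hclosed : ClosedLK j L K)
    (hLsubG : ∀ x : E₀, j x ∈ (Gop D₀).domain ∧ L x = Gap D₀ (j x))
    (hG₀subL : ∀ u ∈ G₀.domain, ∃ x : E₀, j x = u)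
    (hK0 : ∀ x : E₀, j x ∈ G₀.domain → K x = 0) :
    ∀ p ∈ hRel G₀ D₀ j L K, ∀ x₀ : E₀, j x₀ = p.1 →
      (innG D₀ p.1 p.2).re = ‖K x₀‖ ^ 2 ∧ 0 ≤ (innG D₀ p.1 p.2).re := by
  rintro ⟨x, y⟩ ⟨_, hy, x₁, hx₁, e, he⟩ x₀ hx₀
  simp only at hx₁ hx₀ hy he ⊢
  have hxx : x₁ = x₀ := hj_inj (hx₁.trans hx₀.symm)
  subst hxx
  have hey : e = y := by
    refine hG₀dense.eq_of_inner_left (𝕜 := ℂ) ?_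
    intro v hv
    obtain ⟨z, hz⟩ := hG₀subL v hv
    have h1 := he z
    rw [hK0 z (hz ▸ hv), (hLsubG z).2, hz, inner_zero_right, zero_sub] at h1
    have h2 := hy.2 v hv
    unfold innG at h2
    rw [h1]
    exact (eq_neg_of_add_eq_zero_left h2).symm
  have h3 := he x₁
  rw [hey, (hLsubG x₁).2, hx₁, inner_self_eq_norm_sq_to_K] at h3
  have h4 : (innG D₀ x y).re = ‖K x₁‖ ^ 2 := by
    have h5 := congrArg Complex.re h3
    have h6 : (⟪x, y⟫ : ℂ).re = (⟪y, x⟫ : ℂ).re := inner_re_symm (𝕜 := ℂ) x y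
    have h7 : (⟪Gap D₀ x, Gap D₀ y⟫ : ℂ).re = (⟪Gap D₀ y, Gap D₀ x⟫ : ℂ).re :=
      inner_re_symm (𝕜 := ℂ) _ _
    have h8 : (((‖K x₁‖ : ℝ) : ℂ) ^ 2).re = ‖K x₁‖ ^ 2 := by
      rw [← Complex.ofReal_pow, Complex.ofReal_re]
    unfold innG
    rw [Complex.add_re, h6, h7]
    rw [Complex.sub_re] at h5
    have h9 := h5.trans (congrArg (· - _) h8)
    linarith
  exact ⟨h4, h4 ▸ sq_nonneg _⟩
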